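/- Consider a Bayesian share-model simultaneous second price auction with n additive budgeted bidders whose types are drawn independently from finite-support distributions, and in which every item has h ≥ n identical shares. Under the no over-bidding and no over-budgeting assumptions, for every Bayesian Nash equilibrium s, OPT ≤ 51.5 · LW(s). -/

import Mathlib

/-!
Bayesian share-model simultaneous second price auctions with additive budgeted
bidders whose types come from independent finite-support distributions: if every
item has `h ≥ n` identical shares, then under the no over-bidding and no
over-budgeting assumptions, for every Bayesian Nash equilibrium `s`,
`OPT ≤ 51.5 · LW(s)`.
-/

open Finset

/-- A Bayesian share-model simultaneous first price auction: bidder `i` has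
`t i` possible types, drawn with probabilities `π i`; a type consists of
additive values `v i τ j ≥ 0` (a share of item `j` is worth `v i τ j / h`)
and a budget `B i τ ≥ 0`.  Every share is awarded by the deterministic rule
`win` to a bidder with the highest bid on it, and the winner of a share pays the
highest competing bid on it. -/
structure BayesAuction (n m h : ℕ) where
  t : Fin n → ℕ
  π : ∀ i, Fin (t i) → ℝ
  π_nonneg : ∀ i τ, 0 ≤ π i τ
  π_sum : ∀ i, ∑ τ, π i τ = 1
  v : ∀ i, Fin (t i) → Fin m → ℝ
  v_nonneg : ∀ i τ j, 0 ≤ v i τ j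
  B : ∀ i, Fin (t i) → ℝ
  B_nonneg : ∀ i τ, 0 ≤ B i τ
  win : (Fin n → Fin m → Fin h → ℝ) → Fin m → Fin h → Fin n
  win_max : ∀ (b : Fin n → Fin m → Fin h → ℝ) (j : Fin m) (ℓ : Fin h) (i : Fin n),
    b i j ℓ ≤ b (win b j ℓ) j ℓ

/-- A (behavioral) strategy profile: bidder `i` of type `τ` plays the
(nonnegative) bid vector `β i τ k` with probability `p i τ k`. -/
structure BayesStrategy (n m h : ℕ) (t : Fin n → ℕ) where
  K : ∀ i, Fin (t i) → ℕ
  p : ∀ i (τ : Fin (t i)), Fin (K i τ) → ℝ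
  p_nonneg : ∀ i τ k, 0 ≤ p i τ k
  p_sum : ∀ i τ, ∑ k, p i τ k = 1
  β : ∀ i (τ : Fin (t i)), Fin (K i τ) → Fin m → Fin h → ℝ
  β_nonneg : ∀ i τ k j ℓ, 0 ≤ β i τ k j ℓ

namespace Bayes

variable {n m h : ℕ}

/-- Joint probability of the sample point `ω` (a realized type and bid index for
every bidder, independently across bidders). -/
noncomputable def prob (A : BayesAuction n m h) (s : BayesStrategy n m h A.t)
    (ω : ∀ i, Σ τ : Fin (A.t i), Fin (s.K i τ)) : ℝ :=
  ∏ i, A.π i (ω i).1 * s.p i (ω i).1 (ω i).2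

/-- The pure bid profile realized at sample point `ω`. -/
def bids (A : BayesAuction n m h) (s : BayesStrategy n m h A.t)
    (ω : ∀ i, Σ τ : Fin (A.t i), Fin (s.K i τ)) : Fin n → Fin m → Fin h → ℝ :=
  fun i => s.β i (ω i).1 (ω i).2

/-- Value bidder `i` of type `τ` derives from the shares she wins under `b`. -/
noncomputable def val (A : BayesAuction n m h) (i : Fin n) (τ : Fin (A.t i))
    (b : Fin n → Fin m → Fin h → ℝ) : ℝ :=
  ∑ j : Fin m, ∑ ℓ : Fin h, if A.win b j ℓ = i then A.v i τ j / h else 0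

/-- The highest competing bid `max_{k ≠ i} b_{kjℓ}` (bids are nonnegative). -/
noncomputable def maxOther (b : Fin n → Fin m → Fin h → ℝ) (i : Fin n)
    (j : Fin m) (ℓ : Fin h) : ℝ :=
  Finset.fold max 0 (fun k => b k j ℓ) (univ.erase i)

/-- Second-price payment of bidder `i`: the highest competing bid on each share won. -/
noncomputable def pay (A : BayesAuction n m h) (i : Fin n)
    (b : Fin n → Fin m → Fin h → ℝ) : ℝ :=
  ∑ j : Fin m, ∑ ℓ : Fin h, if A.win b j ℓ = i then maxOther b i j ℓ else 0

/-- Quasilinear utility of bidder `i` of type `τ`. -/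
noncomputable def util (A : BayesAuction n m h) (i : Fin n) (τ : Fin (A.t i))
    (b : Fin n → Fin m → Fin h → ℝ) : ℝ :=
  val A i τ b - pay A i b

/-- No over-bidding: the bid of a type-`τ` bidder `i` on each share of item `j`
is at most `v i τ j / h`. -/
def NoOverbid (A : BayesAuction n m h) (i : Fin n) (τ : Fin (A.t i))
    (bi : Fin m → Fin h → ℝ) : Prop :=
  ∀ (j : Fin m) (ℓ : Fin h), bi j ℓ ≤ A.v i τ j / h

/-- No over-budgeting: bids sum to at most the budget. -/
def NoOverbudget (A : BayesAuction n m h) (i : Fin n) (τ : Fin (A.t i))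
    (bi : Fin m → Fin h → ℝ) : Prop :=
  (∑ j : Fin m, ∑ ℓ : Fin h, bi j ℓ) ≤ A.B i τ

/-- `s` is a Bayesian Nash equilibrium within the class of no over-bidding and
no over-budgeting strategies: for every bidder `i`, every type `τ`, and every
deterministic nonnegative deviation `b'` satisfying no over-bidding and no
over-budgeting, the interim expected utility of type `τ` under `s` is at least
that of the deviation (both sides written multiplied by the probability
`π i τ` of the type). -/
def IsBNE (A : BayesAuction n m h) (s : BayesStrategy n m h A.t) : Prop :=
  ∀ i (τ : Fin (A.t i)) (b' : Fin m → Fin h → ℝ), (∀ j ℓ, 0 ≤ b' j ℓ) →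
    NoOverbid A i τ b' → NoOverbudget A i τ b' →
    (∑ ω : ∀ i, Σ τ : Fin (A.t i), Fin (s.K i τ),
        prob A s ω * (if (ω i).1 = τ then util A i τ (bids A s ω) else 0)) ≥
      ∑ ω : ∀ i, Σ τ : Fin (A.t i), Fin (s.K i τ),
        prob A s ω *
          (if (ω i).1 = τ then util A i τ (Function.update (bids A s ω) i b') else 0)

/-- Expected Liquid Welfare of the strategy profile `s`. -/
noncomputable def LW (A : BayesAuction n m h) (s : BayesStrategy n m h A.t) : ℝ :=
  ∑ i, ∑ ω : ∀ i, Σ τ : Fin (A.t i), Fin (s.K i τ),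
    prob A s ω * min (val A i (ω i).1 (bids A s ω)) (A.B i (ω i).1)

end Bayes

namespace LPoA

/-- Averaging over a product distribution factors when `F` ignores coordinate `i`. -/
lemma indep {n : ℕ} {α : Fin n → Type} [∀ i, Fintype (α i)] (g : ∀ i, α i → ℝ)
    (i : Fin n) (hg : ∑ a, g i a = 1) (c : α i → ℝ) (F : (∀ i, α i) → ℝ)
    (hF : ∀ ω ω' : ∀ i, α i, (∀ k, k ≠ i → ω k = ω' k) → F ω = F ω') :
    ∑ ω : ∀ i, α i, (∏ k, g k (ω k)) * (c (ω i) * F ω)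
      = (∑ a, g i a * c a) * ∑ ω : ∀ i, α i, (∏ k, g k (ω k)) * F ω := by
  classical
  have hprod : ∀ (a : α i) (r : ∀ k : {k // k ≠ i}, α k),
      (∏ k, g k ((Equiv.piSplitAt i α).symm (a, r) k))
        = g i a * ∏ k : {k // k ≠ i}, g k (r k) := by
    intro a r
    rw [Fintype.prod_eq_mul_prod_subtype_ne _ i]
    congr 1
    · simp
    · apply Finset.prod_congr rfl
      intro k _
      simp [k.2]
  have hsi : ∀ (a : α i) (r : ∀ k : {k // k ≠ i}, α k),
      (Equiv.piSplitAt i α).symm (a, r) i = a := by intro a r; simp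
  rw [← (Equiv.piSplitAt i α).symm.sum_comp, ← (Equiv.piSplitAt i α).symm.sum_comp,
    Fintype.sum_prod_type_right, Fintype.sum_prod_type_right, Finset.mul_sum]
  apply Finset.sum_congr rfl
  intro r _
  have hne : Nonempty (α i) := by
    by_contra hcon
    rw [not_nonempty_iff] at hcon
    simp at hg
  obtain ⟨a0⟩ := hne
  have hconst : ∀ a, F ((Equiv.piSplitAt i α).symm (a, r))
      = F ((Equiv.piSplitAt i α).symm (a0, r)) := by
    intro a
    apply hF
    intro k hk
    simp [hk]
  simp only [hprod, hsi, hconst]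
  set φ := F ((Equiv.piSplitAt i α).symm (a0, r))
  set R := ∏ k : {k // k ≠ i}, g k (r k)
  have e1 : ∑ a, g i a * R * (c a * φ) = (∑ a, g i a * c a) * (R * φ) := by
    rw [Finset.sum_mul]; apply Finset.sum_congr rfl; intros; ring
  have e2 : ∑ a, g i a * R * φ = (∑ a, g i a) * (R * φ) := by
    rw [Finset.sum_mul]; apply Finset.sum_congr rfl; intros; ring
  rw [e1, e2, hg]; ring

lemma total {n : ℕ} {α : Fin n → Type} [∀ i, Fintype (α i)] (g : ∀ i, α i → ℝ)
    (hg : ∀ i, ∑ a, g i a = 1) : ∑ ω : ∀ i, α i, ∏ k, g k (ω k) = 1 := by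
  classical
  have := (Finset.prod_univ_sum (fun i => (Finset.univ : Finset (α i))) g).symm
  rw [Fintype.piFinset_univ] at this
  rw [this]
  simp [hg]

/-- The cheapest `k` of `h` elements. -/
lemma cheap {ι : Type} [DecidableEq ι] (f : ι → ℝ) (k : ℕ) : ∀ (d : ℕ) (T : Finset ι),
    T.card = k + d → ∃ S ⊆ T, S.card = k ∧ (T.card : ℝ) * ∑ x ∈ S, f x ≤ k * ∑ x ∈ T, f x := by
  intro d
  induction d with
  | zero =>
    intro T hT
    exact ⟨T, subset_rfl, by omega, by rw [hT]; simp⟩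
  | succ d ih =>
    intro T hT
    have hne : T.Nonempty := by rw [← Finset.card_pos]; omega
    obtain ⟨x, hx, hmax⟩ := T.exists_max_image f hne
    have hc : (T.erase x).card = k + d := by rw [Finset.card_erase_of_mem hx]; omega
    obtain ⟨S, hS, hk, hle⟩ := ih _ hc
    refine ⟨S, hS.trans (Finset.erase_subset _ _), hk, ?_⟩
    have h1 : ∑ y ∈ S, f y ≤ k * f x := by
      rw [← hk, ← nsmul_eq_mul]
      exact Finset.sum_le_card_nsmul _ _ _ fun y hy => hmax y (Finset.mem_of_mem_erase (hS hy))
    have h2 := Finset.add_sum_erase T f hx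
    rw [hc] at hle
    rw [hT, ← h2]
    push_cast at hle ⊢
    nlinarith

/-- The real-arithmetic core of the argument. -/
lemma core {Ω : Type} [Fintype Ω] {m : ℕ} (μ : Ω → ℝ) (hμ : ∀ ω, 0 ≤ μ ω) (w : ℝ)
    (f : Ω → Fin m → ℝ) (hf0 : ∀ ω j, 0 ≤ f ω j) (hf1 : ∀ ω j, f ω j ≤ 1)
    (v : Fin m → ℝ) (hv : ∀ j, 0 ≤ v j) (B : ℝ) (hB : 0 ≤ B)
    (X P : Fin m → ℝ) (hX0 : ∀ j, 0 ≤ X j) (hX : ∀ j, X j ≤ w) (hP : ∀ j, P j = ∑ ω, μ ω * f ω j)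
    (Q O : ℝ) (hQ : 0 ≤ Q)
    (hdev : 1 / 2 * (∑ j, v j * min w (X j + 2 * P j)) - Q ≤ ∑ j, v j * P j)
    (hO1 : O ≤ ∑ j, v j * X j) (hO2 : O ≤ w * B) :
    O ≤ 2 * Q + 2 * ∑ ω, μ ω * min (∑ j, v j * f ω j) B := by
  classical
  set W := ∑ ω, μ ω * min (∑ j, v j * f ω j) B with hW
  let e : Fin m → ℝ := fun j => if w < X j + 2 * P j then 1 else 0
  have he0 : ∀ j, 0 ≤ e j := by intro j; simp only [e]; split_ifs <;> norm_num
  have he1 : ∀ j, e j ≤ 1 := by intro j; simp only [e]; split_ifs <;> norm_num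
  set G := ∑ j, e j * (v j * P j) with hG
  set V := ∑ j, e j * v j with hV
  have hP0 : ∀ j, 0 ≤ P j := by
    intro j; rw [hP]; exact Finset.sum_nonneg fun ω _ => mul_nonneg (hμ _) (hf0 _ _)
  have h2 : 1 / 2 * (∑ j, v j * X j) ≤ Q + G := by
    have : ∑ j, 1 / 2 * (v j * X j) ≤ ∑ j, (1 / 2 * (v j * min w (X j + 2 * P j))
        - v j * P j + e j * (v j * P j)) := by
      apply Finset.sum_le_sum
      intro j _
      simp only [e]
      split_ifs with h
      · rw [min_eq_left h.le]
        nlinarith [mul_le_mul_of_nonneg_left (hX j) (hv j)]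
      · rw [min_eq_right (not_lt.mp h)]
        nlinarith
    rw [Finset.sum_add_distrib, Finset.sum_sub_distrib, ← Finset.mul_sum, ← Finset.mul_sum] at this
    linarith
  have hY : ∀ ω, ∑ j, e j * (v j * f ω j) ≤ ∑ j, v j * f ω j := fun ω =>
    Finset.sum_le_sum fun j _ => mul_le_of_le_one_left (mul_nonneg (hv j) (hf0 ω j)) (he1 j)
  have hYV : ∀ ω, ∑ j, e j * (v j * f ω j) ≤ V := fun ω =>
    Finset.sum_le_sum fun j _ => mul_le_mul_of_nonneg_left
      (mul_le_of_le_one_right (hv j) (hf1 ω j)) (he0 j)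
  have hY0 : ∀ ω, 0 ≤ ∑ j, e j * (v j * f ω j) := fun ω =>
    Finset.sum_nonneg fun j _ => mul_nonneg (he0 j) (mul_nonneg (hv j) (hf0 ω j))
  have hGY : G = ∑ ω, μ ω * ∑ j, e j * (v j * f ω j) := by
    rw [hG]
    simp only [hP, Finset.mul_sum]
    rw [Finset.sum_comm]
    apply Finset.sum_congr rfl; intros; apply Finset.sum_congr rfl; intros; ring
  rcases le_or_gt V B with hVB | hVB
  · have : G ≤ W := by
      rw [hGY, hW]
      exact Finset.sum_le_sum fun ω _ => mul_le_mul_of_nonneg_left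
        (le_min (hY ω) ((hYV ω).trans hVB)) (hμ ω)
    linarith
  · have hBG : B * G ≤ V * W := by
      rw [hGY, hW, Finset.mul_sum, Finset.mul_sum]
      apply Finset.sum_le_sum
      intro ω _
      have : B * ∑ j, e j * (v j * f ω j) ≤ V * min (∑ j, v j * f ω j) B := by
        rcases min_cases (∑ j, v j * f ω j) B with ⟨h, h'⟩ | ⟨h, h'⟩ <;> rw [h]
        · exact mul_le_mul hVB.le (hY ω) (hY0 ω) (by linarith)
        · nlinarith [hYV ω]
      nlinarith [mul_le_mul_of_nonneg_left this (hμ ω)]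
    have hsum : 1 / 2 * (w * V) ≤ Q + G := by
      have : ∑ j, 1 / 2 * (w * (e j * v j)) ≤ ∑ j, (1 / 2 * (v j * min w (X j + 2 * P j))
          - v j * P j + e j * (v j * P j)) := by
        apply Finset.sum_le_sum
        intro j _
        simp only [e]
        split_ifs with h
        · rw [min_eq_left h.le]
          linarith
        · rw [min_eq_right (not_lt.mp h)]
          nlinarith [mul_nonneg (hv j) (hX0 j)]
      rw [Finset.sum_add_distrib, Finset.sum_sub_distrib, ← Finset.mul_sum, ← Finset.mul_sum,
        ← Finset.mul_sum] at this
      linarith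
    have hVp : 0 < V := lt_of_le_of_lt hB hVB
    have h3 : V * (1 / 2 * (w * B)) ≤ V * (Q + W) := by
      nlinarith [mul_le_mul_of_nonneg_left hsum hB, mul_le_mul_of_nonneg_right hVB.le hQ]
    have := le_of_mul_le_mul_left h3 hVp
    linarith

end LPoA

namespace LPoA

open Bayes

variable {n m h : ℕ}

lemma prob_nonneg (A : BayesAuction n m h) (s : BayesStrategy n m h A.t)
    (ω : ∀ i, Σ τ : Fin (A.t i), Fin (s.K i τ)) : 0 ≤ prob A s ω :=
  Finset.prod_nonneg fun i _ => mul_nonneg (A.π_nonneg _ _) (s.p_nonneg _ _ _)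

lemma wt_sum (A : BayesAuction n m h) (s : BayesStrategy n m h A.t) (i : Fin n) (c : Fin (A.t i) → ℝ) :
    ∑ a : (Σ τ : Fin (A.t i), Fin (s.K i τ)), A.π i a.1 * s.p i a.1 a.2 * c a.1
      = ∑ τ, A.π i τ * c τ := by
  rw [Fintype.sum_sigma]
  apply Finset.sum_congr rfl
  intro τ _
  have : ∀ k, A.π i τ * s.p i τ k * c τ = s.p i τ k * (A.π i τ * c τ) := by intro k; ring
  simp only [this]
  rw [← Finset.sum_mul, s.p_sum, one_mul]

lemma wt_one (A : BayesAuction n m h) (s : BayesStrategy n m h A.t) (i : Fin n) :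
    ∑ a : (Σ τ : Fin (A.t i), Fin (s.K i τ)), A.π i a.1 * s.p i a.1 a.2 = 1 := by
  have := wt_sum A s i (fun _ => 1)
  simpa [A.π_sum] using this

lemma prob_sum (A : BayesAuction n m h) (s : BayesStrategy n m h A.t) :
    ∑ ω : ∀ i, Σ τ : Fin (A.t i), Fin (s.K i τ), prob A s ω = 1 :=
  total (fun i (a : Σ τ : Fin (A.t i), Fin (s.K i τ)) => A.π i a.1 * s.p i a.1 a.2)
    (fun i => wt_one A s i)

/-- Conditioning on the type of bidder `i` does not matter for what ignores bidder `i`. -/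
lemma cond_indep (A : BayesAuction n m h) (s : BayesStrategy n m h A.t) (i : Fin n)
    (τ : Fin (A.t i)) (F : (∀ i, Σ τ : Fin (A.t i), Fin (s.K i τ)) → ℝ)
    (hF : ∀ ω ω', (∀ k, k ≠ i → ω k = ω' k) → F ω = F ω') :
    ∑ ω, prob A s ω * ((if (ω i).1 = τ then 1 else 0) * F ω)
      = A.π i τ * ∑ ω, prob A s ω * F ω := by
  have := indep (fun i (a : Σ τ : Fin (A.t i), Fin (s.K i τ)) => A.π i a.1 * s.p i a.1 a.2) i
    (wt_one A s i) (fun a => if a.1 = τ then 1 else 0) F hF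
  have h2 := wt_sum A s i (fun τ' => if τ' = τ then 1 else 0)
  simp only [prob]
  rw [this, h2]
  simp

lemma util_eq (A : BayesAuction n m h) (i : Fin n) (τ : Fin (A.t i))
    (b : Fin n → Fin m → Fin h → ℝ) :
    util A i τ b = ∑ j : Fin m, ∑ ℓ : Fin h,
      if A.win b j ℓ = i then A.v i τ j / h - maxOther b i j ℓ else 0 := by
  simp only [util, Bayes.val, pay, ← Finset.sum_sub_distrib]
  apply Finset.sum_congr rfl; intro j _; apply Finset.sum_congr rfl; intro ℓ _
  split_ifs <;> simp

lemma maxOther_congr (b b' : Fin n → Fin m → Fin h → ℝ) (i : Fin n) (j : Fin m) (ℓ : Fin h)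
    (hb : ∀ k, k ≠ i → b k = b' k) : maxOther b i j ℓ = maxOther b' i j ℓ := by
  unfold maxOther
  apply Finset.fold_congr
  intro k hk
  rw [hb k (Finset.ne_of_mem_erase hk)]

lemma maxOther_nonneg (b : Fin n → Fin m → Fin h → ℝ) (i : Fin n) (j : Fin m) (ℓ : Fin h) :
    0 ≤ maxOther b i j ℓ := by
  unfold maxOther
  rw [Finset.le_fold_max]; left; exact le_rfl

lemma maxOther_le (b : Fin n → Fin m → Fin h → ℝ) (i : Fin n) (j : Fin m) (ℓ : Fin h) (c : ℝ)
    (hc : 0 ≤ c) (hb : ∀ k, k ≠ i → b k j ℓ ≤ c) : maxOther b i j ℓ ≤ c := by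
  unfold maxOther
  rw [Finset.fold_max_le]
  exact ⟨hc, fun k hk => hb k (Finset.ne_of_mem_erase hk)⟩

lemma le_maxOther (b : Fin n → Fin m → Fin h → ℝ) (i k : Fin n) (j : Fin m) (ℓ : Fin h)
    (hk : k ≠ i) : b k j ℓ ≤ maxOther b i j ℓ := by
  unfold maxOther
  rw [Finset.le_fold_max]
  right; exact ⟨k, by simp [hk], le_rfl⟩

/-- Utility on one share from bidding `c ≤ v/h`. -/
lemma share_util (A : BayesAuction n m h) (b : Fin n → Fin m → Fin h → ℝ) (i : Fin n)
    (j : Fin m) (ℓ : Fin h) (V : ℝ) (hc0 : 0 ≤ b i j ℓ) (hc : b i j ℓ ≤ V) :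
    (0 ≤ if A.win b j ℓ = i then V - maxOther b i j ℓ else 0) ∧
    (maxOther b i j ℓ < b i j ℓ →
      (if A.win b j ℓ = i then V - maxOther b i j ℓ else 0) = V - maxOther b i j ℓ) := by
  constructor
  · split_ifs with hw
    · have : maxOther b i j ℓ ≤ b i j ℓ := by
        apply maxOther_le _ _ _ _ _ hc0
        intro k _
        have := A.win_max b j ℓ k
        rwa [hw] at this
      linarith
    · exact le_rfl
  · intro hlt
    have : A.win b j ℓ = i := by
      by_contra hne
      have h1 := le_maxOther b i _ j ℓ hne
      have h2 := A.win_max b j ℓ i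
      linarith
    simp [this]

lemma share_bound (V q δ p u c : ℝ) (hV : 0 ≤ V) (hδ : 0 < δ) (hq : 0 ≤ q) (hp : 0 ≤ p)
    (hc : c = min (2 * q + δ) V) (hu0 : 0 ≤ u) (hu : p < c → u = V - p) :
    (if 2 * q + δ ≤ V then V - V / (2 * q + δ) * p else V - p) ≤ u := by
  have ht : 0 < 2 * q + δ := by linarith
  split_ifs with hle
  · rw [min_eq_left hle] at hc
    rcases lt_or_ge p c with hpc | hpc
    · rw [hu hpc]
      have : 1 ≤ V / (2 * q + δ) := by rwa [one_le_div ht]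
      nlinarith
    · have : V ≤ V / (2 * q + δ) * p := by
        rw [div_mul_eq_mul_div, le_div_iff₀ ht]
        apply mul_le_mul_of_nonneg_left _ hV
        linarith
      linarith
  · rw [min_eq_right (not_le.mp hle).le] at hc
    rcases lt_or_ge p c with hpc | hpc
    · rw [hu hpc]
    · linarith

/-- The deviation inequality. -/
lemma dev (A : BayesAuction n m h) (s : BayesStrategy n m h A.t)
    (hBNE : IsBNE A s) (i : Fin n) (τ : Fin (A.t i)) (q : Fin m → Fin h → ℝ)
    (hq0 : ∀ j ℓ, 0 ≤ q j ℓ)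
    (hq : ∀ j ℓ, ∑ ω, prob A s ω * ((if (ω i).1 = τ then 1 else 0) * maxOther (bids A s ω) i j ℓ)
      ≤ A.π i τ * q j ℓ)
    (K : Fin m → Finset (Fin h)) (hK : 2 * ∑ j, ∑ ℓ ∈ K j, q j ℓ < A.B i τ) :
    A.π i τ * ∑ j, ∑ ℓ ∈ K j, (1 / 2 * (A.v i τ j / h) - q j ℓ) ≤
      ∑ ω : ∀ i, Σ τ : Fin (A.t i), Fin (s.K i τ),
        prob A s ω * (if (ω i).1 = τ then util A i τ (bids A s ω) else 0) := by
  classical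
  have hv : ∀ j, 0 ≤ A.v i τ j / h := fun j => div_nonneg (A.v_nonneg _ _ _) (Nat.cast_nonneg _)
  set D := A.B i τ - 2 * ∑ j, ∑ ℓ ∈ K j, q j ℓ with hD
  have hDpos : 0 < D := by linarith
  set N : ℝ := (∑ j : Fin m, ((K j).card : ℝ)) + 1 with hN
  have hNpos : 0 < N := by
    have : 0 ≤ ∑ j : Fin m, ((K j).card : ℝ) := Finset.sum_nonneg fun _ _ => Nat.cast_nonneg _
    linarith
  set δ := D / N with hδ
  have hδpos : 0 < δ := div_pos hDpos hNpos
  let b' : Fin m → Fin h → ℝ := fun j ℓ =>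
    if ℓ ∈ K j then min (2 * q j ℓ + δ) (A.v i τ j / h) else 0
  have hb0 : ∀ j ℓ, 0 ≤ b' j ℓ := by
    intro j ℓ; simp only [b']; split_ifs
    · exact le_min (by linarith [hq0 j ℓ]) (hv j)
    · exact le_rfl
  have hb1 : NoOverbid A i τ b' := by
    intro j ℓ; simp only [b']; split_ifs
    · exact min_le_right _ _
    · exact hv j
  have hb2 : NoOverbudget A i τ b' := by
    unfold NoOverbudget
    have h1 : ∀ j, ∑ ℓ, b' j ℓ ≤ 2 * (∑ ℓ ∈ K j, q j ℓ) + (K j).card * δ := by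
      intro j
      simp only [b']
      rw [Finset.sum_ite_mem, Finset.univ_inter]
      calc _ ≤ ∑ ℓ ∈ K j, (2 * q j ℓ + δ) := Finset.sum_le_sum fun ℓ _ => min_le_left _ _
        _ = _ := by rw [Finset.sum_add_distrib, ← Finset.mul_sum]; simp
    have h2 := Finset.sum_le_sum fun j (_ : j ∈ Finset.univ) => h1 j
    rw [Finset.sum_add_distrib, ← Finset.mul_sum, ← Finset.sum_mul] at h2
    have h3 : N * δ = D := by rw [hδ]; field_simp
    have h4 : (∑ j : Fin m, ((K j).card : ℝ)) * δ = D - δ := by rw [← h3, hN]; ring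
    linarith
  refine le_trans ?_ (hBNE i τ b' hb0 hb1 hb2)
  -- lower bound, share by share
  let L : Fin m → Fin h → ℝ → ℝ := fun j ℓ p =>
    if 2 * q j ℓ + δ ≤ A.v i τ j / h then
      A.v i τ j / h - (A.v i τ j / h) / (2 * q j ℓ + δ) * p else A.v i τ j / h - p
  have hpt : ∀ ω, (if (ω i).1 = τ then (1:ℝ) else 0) *
        ∑ j, ∑ ℓ ∈ K j, L j ℓ (maxOther (bids A s ω) i j ℓ) ≤
      if (ω i).1 = τ then util A i τ (Function.update (bids A s ω) i b') else 0 := by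
    intro ω
    split_ifs with hτ
    · rw [one_mul, util_eq]
      apply Finset.sum_le_sum
      intro j _
      set b := Function.update (bids A s ω) i b' with hb
      have hbi : ∀ ℓ, b i j ℓ = b' j ℓ := by intro ℓ; simp [hb]
      have hmo : ∀ ℓ, maxOther (bids A s ω) i j ℓ = maxOther b i j ℓ := fun ℓ =>
        maxOther_congr _ _ _ _ _ fun k hk => by simp [hb, hk]
      have hsu := fun ℓ => share_util A b i j ℓ (A.v i τ j / h) (by rw [hbi]; exact hb0 j ℓ)
        (by rw [hbi]; exact hb1 j ℓ)
      refine le_trans ?_ (Finset.sum_le_sum_of_subset_of_nonneg (Finset.subset_univ (K j))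
        fun ℓ _ _ => (hsu ℓ).1)
      apply Finset.sum_le_sum
      intro ℓ hℓ
      rw [hmo]
      exact share_bound _ (q j ℓ) δ _ _ (b i j ℓ) (hv j) hδpos (hq0 j ℓ) (maxOther_nonneg _ _ _ _)
        (by rw [hbi]; simp [b', hℓ]) (hsu ℓ).1 (hsu ℓ).2
    · simp
  refine le_trans ?_ (Finset.sum_le_sum fun ω _ =>
    mul_le_mul_of_nonneg_left (hpt ω) (prob_nonneg A s ω))
  have hw : ∑ ω, prob A s ω * (if (ω i).1 = τ then 1 else 0) = A.π i τ := by
    have := cond_indep A s i τ (fun _ => 1) (fun _ _ _ => rfl)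
    simpa [prob_sum] using this
  have hswap : ∑ ω, prob A s ω * ((if (ω i).1 = τ then (1:ℝ) else 0) *
        ∑ j, ∑ ℓ ∈ K j, L j ℓ (maxOther (bids A s ω) i j ℓ))
      = ∑ j, ∑ ℓ ∈ K j, ∑ ω, prob A s ω * ((if (ω i).1 = τ then (1:ℝ) else 0) *
        L j ℓ (maxOther (bids A s ω) i j ℓ)) := by
    simp only [Finset.mul_sum]
    rw [Finset.sum_comm]
    apply Finset.sum_congr rfl; intro j _
    rw [Finset.sum_comm]
  rw [hswap, Finset.mul_sum]
  apply Finset.sum_le_sum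
  intro j _
  rw [Finset.mul_sum]
  apply Finset.sum_le_sum
  intro ℓ _
  have hlin : ∀ a c : ℝ, ∑ ω, prob A s ω * ((if (ω i).1 = τ then (1:ℝ) else 0) *
        (a - c * maxOther (bids A s ω) i j ℓ)) = A.π i τ * a - c *
        ∑ ω, prob A s ω * ((if (ω i).1 = τ then 1 else 0) * maxOther (bids A s ω) i j ℓ) := by
    intro a c
    rw [← hw, Finset.sum_mul, Finset.mul_sum, ← Finset.sum_sub_distrib]
    apply Finset.sum_congr rfl; intros; ring
  have hπ := A.π_nonneg i τ
  have hqq := hq j ℓ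
  have hq00 := hq0 j ℓ
  have hvj := hv j
  simp only [L]
  split_ifs with hle
  · rw [hlin]
    have ht : 0 < 2 * q j ℓ + δ := by linarith
    have hcn : 0 ≤ A.v i τ j / h / (2 * q j ℓ + δ) := div_nonneg hvj ht.le
    have h1 := mul_le_mul_of_nonneg_left hqq hcn
    have h2 : A.v i τ j / h / (2 * q j ℓ + δ) * q j ℓ ≤ 1 / 2 * (A.v i τ j / h) := by
      rw [div_mul_eq_mul_div, div_le_iff₀ ht]
      nlinarith [mul_nonneg hvj hδpos.le]
    nlinarith [mul_le_mul_of_nonneg_left h2 hπ, mul_nonneg hπ hq00]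
  · have := hlin (A.v i τ j / h) 1
    simp only [one_mul] at this
    rw [this]
    nlinarith [mul_nonneg hπ hvj]

end LPoA

namespace LPoA

open Bayes

variable {n m h : ℕ}

/-- Fraction of item `j` assigned to `i`. -/
noncomputable def frac (a : Fin m → Fin h → Fin n) (i : Fin n) (j : Fin m) : ℝ :=
  ∑ ℓ : Fin h, if a j ℓ = i then 1 / (h : ℝ) else 0

lemma frac_nonneg (a : Fin m → Fin h → Fin n) (i : Fin n) (j : Fin m) : 0 ≤ frac a i j :=
  Finset.sum_nonneg fun ℓ _ => by split_ifs <;> positivity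

lemma frac_sum (hh : 0 < h) (a : Fin m → Fin h → Fin n) (j : Fin m) : ∑ i, frac a i j = 1 := by
  unfold frac
  rw [Finset.sum_comm]
  have : (h : ℝ) ≠ 0 := by positivity
  simp [this]

lemma frac_le (hh : 0 < h) (a : Fin m → Fin h → Fin n) (i : Fin n) (j : Fin m) :
    frac a i j ≤ 1 := by
  rw [← frac_sum hh a j]
  exact Finset.single_le_sum (f := fun i => frac a i j) (fun k _ => frac_nonneg a k j)
    (Finset.mem_univ i)

lemma value_eq (a : Fin m → Fin h → Fin n) (i : Fin n) (v : Fin m → ℝ) :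
    (∑ j : Fin m, ∑ ℓ : Fin h, if a j ℓ = i then v j / h else 0) = ∑ j, v j * frac a i j := by
  unfold frac
  simp only [Finset.mul_sum]
  apply Finset.sum_congr rfl; intro j _; apply Finset.sum_congr rfl; intro ℓ _
  split_ifs
  · ring
  · ring

/-- Expected highest bid on a share. -/
noncomputable def price (A : BayesAuction n m h) (s : BayesStrategy n m h A.t)
    (j : Fin m) (ℓ : Fin h) : ℝ :=
  ∑ ω, prob A s ω * bids A s ω (A.win (bids A s ω) j ℓ) j ℓ

lemma price_nonneg (A : BayesAuction n m h) (s : BayesStrategy n m h A.t)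
    (j : Fin m) (ℓ : Fin h) : 0 ≤ price A s j ℓ :=
  Finset.sum_nonneg fun ω _ => mul_nonneg (prob_nonneg A s ω) (s.β_nonneg _ _ _ _ _)

lemma price_bound (A : BayesAuction n m h) (s : BayesStrategy n m h A.t) (i : Fin n)
    (τ : Fin (A.t i)) (j : Fin m) (ℓ : Fin h) :
    ∑ ω, prob A s ω * ((if (ω i).1 = τ then 1 else 0) * maxOther (bids A s ω) i j ℓ)
      ≤ A.π i τ * price A s j ℓ := by
  rw [cond_indep A s i τ (fun ω => maxOther (bids A s ω) i j ℓ)]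
  · apply mul_le_mul_of_nonneg_left _ (A.π_nonneg i τ)
    apply Finset.sum_le_sum
    intro ω _
    apply mul_le_mul_of_nonneg_left _ (prob_nonneg A s ω)
    exact maxOther_le _ _ _ _ _ (s.β_nonneg _ _ _ _ _) fun k _ => A.win_max _ _ _ _
  · intro ω ω' hω
    apply maxOther_congr
    intro k hk
    unfold bids
    rw [hω k hk]

lemma price_total (A : BayesAuction n m h) (s : BayesStrategy n m h A.t)
    (hs_nob : ∀ i (τ : Fin (A.t i)) k, NoOverbid A i τ (s.β i τ k))
    (hs_nobud : ∀ i (τ : Fin (A.t i)) k, NoOverbudget A i τ (s.β i τ k)) :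
    ∑ j, ∑ ℓ, price A s j ℓ ≤ LW A s := by
  have e : ∑ j, ∑ ℓ, price A s j ℓ = ∑ ω, prob A s ω *
      ∑ j, ∑ ℓ, bids A s ω (A.win (bids A s ω) j ℓ) j ℓ := by
    simp only [price, Finset.mul_sum]
    symm
    rw [Finset.sum_comm]
    apply Finset.sum_congr rfl; intro j _
    rw [Finset.sum_comm]
  rw [e]
  unfold LW
  rw [Finset.sum_comm]
  apply Finset.sum_le_sum
  intro ω _
  rw [← Finset.mul_sum]
  apply mul_le_mul_of_nonneg_left _ (prob_nonneg A s ω)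
  have e2 : ∑ j, ∑ ℓ, bids A s ω (A.win (bids A s ω) j ℓ) j ℓ
      = ∑ i, ∑ j, ∑ ℓ, if A.win (bids A s ω) j ℓ = i then bids A s ω i j ℓ else 0 := by
    rw [Finset.sum_comm]
    rw [Finset.sum_comm]
    symm
    rw [Finset.sum_comm]
    apply Finset.sum_congr rfl; intro j _
    rw [Finset.sum_comm]
    simp
  rw [e2]
  apply Finset.sum_le_sum
  intro i _
  apply le_min
  · unfold Bayes.val
    apply Finset.sum_le_sum; intro j _; apply Finset.sum_le_sum; intro ℓ _
    split_ifs
    · exact hs_nob i _ _ j ℓ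
    · exact le_rfl
  · refine le_trans ?_ (hs_nobud i (ω i).1 (ω i).2)
    apply Finset.sum_le_sum; intro j _; apply Finset.sum_le_sum; intro ℓ _
    split_ifs
    · exact le_rfl
    · exact s.β_nonneg _ _ _ _ _

lemma key (hh : 0 < h) (A : BayesAuction n m h) (s : BayesStrategy n m h A.t)
    (hBNE : IsBNE A s) (i : Fin n) (τ : Fin (A.t i)) (X : Fin m → ℝ) (O : ℝ)
    (hX0 : ∀ j, 0 ≤ X j) (hX : ∀ j, X j ≤ A.π i τ)
    (hO1 : O ≤ ∑ j, A.v i τ j * X j) (hO2 : O ≤ A.π i τ * A.B i τ) :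
    O ≤ 2 * (∑ j, (∑ ℓ, price A s j ℓ) * (X j + 2 * (∑ ω, prob A s ω *
          ((if (ω i).1 = τ then 1 else 0) * frac (A.win (bids A s ω)) i j)) + A.π i τ / h))
      + 2 * ∑ ω, prob A s ω * ((if (ω i).1 = τ then 1 else 0) *
          min (Bayes.val A i τ (bids A s ω)) (A.B i τ)) := by
  classical
  set w := A.π i τ with hw
  have hw0 : 0 ≤ w := A.π_nonneg i τ
  have hhR : (0:ℝ) < h := by exact_mod_cast hh
  let μ : (∀ i, Σ τ : Fin (A.t i), Fin (s.K i τ)) → ℝ := fun ω =>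
    prob A s ω * (if (ω i).1 = τ then 1 else 0)
  have hμ : ∀ ω, 0 ≤ μ ω := fun ω => mul_nonneg (prob_nonneg A s ω) (by split_ifs <;> norm_num)
  let P : Fin m → ℝ := fun j => ∑ ω, μ ω * frac (A.win (bids A s ω)) i j
  have hP0 : ∀ j, 0 ≤ P j := fun j =>
    Finset.sum_nonneg fun ω _ => mul_nonneg (hμ ω) (frac_nonneg _ _ _)
  have hval : ∀ ω, Bayes.val A i τ (bids A s ω)
      = ∑ j, A.v i τ j * frac (A.win (bids A s ω)) i j := fun ω => value_eq _ _ _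
  simp only [← mul_assoc (prob A s _), hval]
  change O ≤ 2 * (∑ j, (∑ ℓ, price A s j ℓ) * (X j + 2 * P j + w / h))
    + 2 * ∑ ω, μ ω * min (∑ j, A.v i τ j * frac (A.win (bids A s ω)) i j) (A.B i τ)
  set W := ∑ ω, μ ω * min (∑ j, A.v i τ j * frac (A.win (bids A s ω)) i j) (A.B i τ) with hWdef
  have hW0 : 0 ≤ W := Finset.sum_nonneg fun ω _ => mul_nonneg (hμ ω)
    (le_min (Finset.sum_nonneg fun j _ => mul_nonneg (A.v_nonneg _ _ _) (frac_nonneg _ _ _))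
      (A.B_nonneg i τ))
  have hq0 : ∀ j, 0 ≤ ∑ ℓ, price A s j ℓ := fun j =>
    Finset.sum_nonneg fun ℓ _ => price_nonneg A s j ℓ
  rcases hw0.eq_or_lt with hwz | hwpos
  · have : 0 ≤ ∑ j, (∑ ℓ, price A s j ℓ) * (X j + 2 * P j + w / h) :=
      Finset.sum_nonneg fun j _ => mul_nonneg (hq0 j) (by
        have := hX0 j; have := hP0 j; positivity)
    rw [← hwz, zero_mul] at hO2
    linarith
  let z : Fin m → ℝ := fun j => min w (X j + 2 * P j)
  have hz0 : ∀ j, 0 ≤ z j := fun j => le_min hw0 (by linarith [hX0 j, hP0 j])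
  let k : Fin m → ℕ := fun j => ⌈z j / w * h⌉₊
  have hkh : ∀ j, k j ≤ h := by
    intro j
    apply Nat.ceil_le.mpr
    have : z j / w ≤ 1 := by rw [div_le_one hwpos]; exact min_le_left _ _
    nlinarith
  have hk1 : ∀ j, z j * h ≤ w * k j := by
    intro j
    have : z j / w * h ≤ k j := Nat.le_ceil _
    have h2 := mul_le_mul_of_nonneg_left this hw0
    have h3 : w * (z j / w * h) = z j * h := by field_simp
    linarith
  have hk2 : ∀ j, w * k j ≤ z j * h + w := by
    intro j
    have : (k j : ℝ) < z j / w * h + 1 :=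
      Nat.ceil_lt_add_one (mul_nonneg (div_nonneg (hz0 j) hw0) hhR.le)
    have h2 := mul_le_mul_of_nonneg_left this.le hw0
    have h3 : w * (z j / w * h + 1) = z j * h + w := by field_simp
    linarith
  have hcheap : ∀ j, ∃ S : Finset (Fin h), S.card = k j ∧
      (h : ℝ) * ∑ ℓ ∈ S, price A s j ℓ ≤ k j * ∑ ℓ, price A s j ℓ := by
    intro j
    obtain ⟨S, _, h1, h2⟩ := cheap (fun ℓ => price A s j ℓ) (k j) (h - k j)
      (Finset.univ : Finset (Fin h)) (by have := hkh j; simp; omega)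
    refine ⟨S, h1, ?_⟩
    simpa using h2
  choose K hKc hKq using hcheap
  set Q := w * ∑ j, ∑ ℓ ∈ K j, price A s j ℓ with hQ
  have hQ0 : 0 ≤ Q := mul_nonneg hw0 (Finset.sum_nonneg fun j _ =>
    Finset.sum_nonneg fun ℓ _ => price_nonneg A s j ℓ)
  have hQle : Q ≤ ∑ j, (∑ ℓ, price A s j ℓ) * (X j + 2 * P j + w / h) := by
    rw [hQ, Finset.mul_sum]
    apply Finset.sum_le_sum
    intro j _
    have h1 : w * (h * ∑ ℓ ∈ K j, price A s j ℓ) ≤ (∑ ℓ, price A s j ℓ) * (z j * h + w) := by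
      have := mul_le_mul_of_nonneg_left (hKq j) hw0
      have := mul_le_mul_of_nonneg_left (hk2 j) (hq0 j)
      linarith
    have h2 : (∑ ℓ, price A s j ℓ) * (z j * h + w)
        ≤ (∑ ℓ, price A s j ℓ) * ((X j + 2 * P j) * h + w) := by
      apply mul_le_mul_of_nonneg_left _ (hq0 j)
      have : z j ≤ X j + 2 * P j := min_le_right _ _
      nlinarith
    have h3 : (∑ ℓ, price A s j ℓ) * ((X j + 2 * P j) * h + w)
        = h * ((∑ ℓ, price A s j ℓ) * (X j + 2 * P j + w / h)) := by field_simp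
    apply le_of_mul_le_mul_left _ hhR
    linarith
  suffices hs : O ≤ 2 * Q + 2 * W by linarith
  rcases le_or_gt (A.B i τ) (2 * ∑ j, ∑ ℓ ∈ K j, price A s j ℓ) with hc | hc
  · have := mul_le_mul_of_nonneg_left hc hw0
    rw [hQ]; linarith
  · have hd := dev A s hBNE i τ (price A s) (price_nonneg A s) (price_bound A s i τ) K hc
    apply core μ hμ w (fun ω j => frac (A.win (bids A s ω)) i j)
      (fun ω j => frac_nonneg _ _ _) (fun ω j => frac_le hh _ _ _) (A.v i τ) (A.v_nonneg i τ)
      (A.B i τ) (A.B_nonneg i τ) X P hX0 hX (fun j => rfl) Q O hQ0 ?_ hO1 hO2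
    have hU : ∑ ω : ∀ i, Σ τ : Fin (A.t i), Fin (s.K i τ),
        prob A s ω * (if (ω i).1 = τ then util A i τ (bids A s ω) else 0)
        ≤ ∑ j, A.v i τ j * P j := by
      have e : ∑ j, A.v i τ j * P j = ∑ ω, μ ω * Bayes.val A i τ (bids A s ω) := by
        simp only [hval, P, Finset.mul_sum]
        rw [Finset.sum_comm]
        apply Finset.sum_congr rfl; intros; apply Finset.sum_congr rfl; intros; ring
      rw [e]
      apply Finset.sum_le_sum
      intro ω _
      simp only [μ, mul_assoc]
      apply mul_le_mul_of_nonneg_left _ (prob_nonneg A s ω)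
      split_ifs
      · have : 0 ≤ pay A i (bids A s ω) := Finset.sum_nonneg fun j _ =>
          Finset.sum_nonneg fun ℓ _ => by
            split_ifs
            · exact maxOther_nonneg _ _ _ _
            · exact le_rfl
        unfold util; linarith
      · simp
    refine le_trans ?_ (hd.trans hU)
    have e3 : w * ∑ j, ∑ ℓ ∈ K j, (1 / 2 * (A.v i τ j / h) - price A s j ℓ)
        = ∑ j, w * (k j * (1 / 2 * (A.v i τ j / h))) - Q := by
      rw [hQ, Finset.mul_sum, Finset.mul_sum, ← Finset.sum_sub_distrib]
      apply Finset.sum_congr rfl; intro j _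
      rw [Finset.sum_sub_distrib, Finset.sum_const, hKc, nsmul_eq_mul]
      ring
    rw [e3, Finset.mul_sum]
    apply sub_le_sub_right
    apply Finset.sum_le_sum
    intro j _
    have hvh : 0 ≤ 1 / 2 * (A.v i τ j / h) :=
      mul_nonneg (by norm_num) (div_nonneg (A.v_nonneg _ _ _) hhR.le)
    have := mul_le_mul_of_nonneg_right (hk1 j) hvh
    have e4 : z j * h * (1 / 2 * (A.v i τ j / h)) = 1 / 2 * (A.v i τ j * z j) := by field_simp
    change 1 / 2 * (A.v i τ j * z j) ≤ _
    linarith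

end LPoA

/-- **Liquid price of anarchy of Bayesian Nash equilibria of simultaneous second
price auctions** (share model): if every item has `h ≥ n` shares and all
strategies satisfy no over-bidding and no over-budgeting, then for every
Bayesian Nash equilibrium `s` and every type-dependent allocation of the shares
(in particular a pointwise optimal one, whose expected Liquid Welfare is `OPT`),
the expected Liquid Welfare of the allocation is at most `51.5 · LW(s)`. -/
theorem liquid_poa_bayesian_second_price {n m h : ℕ} (hh : 0 < h) (hnh : n ≤ h)
    (A : BayesAuction n m h) (s : BayesStrategy n m h A.t)
    (hs_nob : ∀ i (τ : Fin (A.t i)) k, Bayes.NoOverbid A i τ (s.β i τ k))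
    (hs_nobud : ∀ i (τ : Fin (A.t i)) k, Bayes.NoOverbudget A i τ (s.β i τ k))
    (hBNE : Bayes.IsBNE A s)
    (ALLOC : (∀ i, Fin (A.t i)) → Fin m → Fin h → Fin n) :
    ∑ θ : ∀ i, Fin (A.t i), (∏ i, A.π i (θ i)) *
        ∑ i, min (∑ j : Fin m, ∑ ℓ : Fin h,
            if ALLOC θ j ℓ = i then A.v i (θ i) j / h else 0)
          (A.B i (θ i))
      ≤ 51.5 * Bayes.LW A s := by
  classical
  have hhR : (0:ℝ) < h := by exact_mod_cast hh
  have hπp : ∀ θ : ∀ i, Fin (A.t i), 0 ≤ ∏ i, A.π i (θ i) := fun θ =>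
    Finset.prod_nonneg fun i _ => A.π_nonneg i (θ i)
  have hπt : ∑ θ : ∀ i, Fin (A.t i), ∏ i, A.π i (θ i) = 1 := LPoA.total A.π A.π_sum
  have hπc : ∀ i (τ : Fin (A.t i)), ∑ θ : ∀ i, Fin (A.t i), (∏ i, A.π i (θ i)) *
      (if θ i = τ then (1:ℝ) else 0) = A.π i τ := by
    intro i τ
    have := LPoA.indep A.π i (A.π_sum i) (fun a => if a = τ then (1:ℝ) else 0) (fun _ => 1)
      (fun _ _ _ => rfl)
    simpa [hπt] using this
  let X : ∀ i, Fin (A.t i) → Fin m → ℝ := fun i τ j => ∑ θ : ∀ i, Fin (A.t i),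
    (∏ i, A.π i (θ i)) * ((if θ i = τ then 1 else 0) * LPoA.frac (ALLOC θ) i j)
  let P : ∀ i, Fin (A.t i) → Fin m → ℝ := fun i τ j => ∑ ω, Bayes.prob A s ω *
    ((if (ω i).1 = τ then 1 else 0) * LPoA.frac (A.win (Bayes.bids A s ω)) i j)
  let O : ∀ i, Fin (A.t i) → ℝ := fun i τ => ∑ θ : ∀ i, Fin (A.t i),
    (∏ i, A.π i (θ i)) * ((if θ i = τ then 1 else 0) *
      min (∑ j, A.v i τ j * LPoA.frac (ALLOC θ) i j) (A.B i τ))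
  let W : ∀ i, Fin (A.t i) → ℝ := fun i τ => ∑ ω, Bayes.prob A s ω *
    ((if (ω i).1 = τ then 1 else 0) * min (Bayes.val A i τ (Bayes.bids A s ω)) (A.B i τ))
  have hite : ∀ {p : Prop} [Decidable p], (0:ℝ) ≤ if p then 1 else 0 := by
    intro p _; split_ifs <;> norm_num
  have hkey : ∀ i τ, O i τ ≤ 2 * (∑ j, (∑ ℓ, LPoA.price A s j ℓ) *
      (X i τ j + 2 * P i τ j + A.π i τ / h)) + 2 * W i τ := by
    intro i τ
    apply LPoA.key hh A s hBNE i τ (X i τ) (O i τ)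
    · intro j
      exact Finset.sum_nonneg fun θ _ => mul_nonneg (hπp θ)
        (mul_nonneg hite (LPoA.frac_nonneg _ _ _))
    · intro j
      rw [← hπc i τ]
      exact Finset.sum_le_sum fun θ _ => mul_le_mul_of_nonneg_left
        (mul_le_of_le_one_right hite (LPoA.frac_le hh _ _ _)) (hπp θ)
    · have e : ∑ j, A.v i τ j * X i τ j = ∑ θ : ∀ i, Fin (A.t i), (∏ i, A.π i (θ i)) *
          ((if θ i = τ then 1 else 0) * ∑ j, A.v i τ j * LPoA.frac (ALLOC θ) i j) := by
        simp only [X, Finset.mul_sum]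
        rw [Finset.sum_comm]
        apply Finset.sum_congr rfl; intros; apply Finset.sum_congr rfl; intros; ring
      rw [e]
      exact Finset.sum_le_sum fun θ _ => mul_le_mul_of_nonneg_left
        (mul_le_mul_of_nonneg_left (min_le_left _ _) hite) (hπp θ)
    · rw [← hπc i τ, Finset.sum_mul]
      refine Finset.sum_le_sum fun θ _ => ?_
      rw [mul_assoc]
      exact mul_le_mul_of_nonneg_left
        (mul_le_mul_of_nonneg_left (min_le_right _ _) hite) (hπp θ)
  -- aggregation
  have hOsum : ∑ θ : ∀ i, Fin (A.t i), (∏ i, A.π i (θ i)) *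
        ∑ i, min (∑ j : Fin m, ∑ ℓ : Fin h,
            if ALLOC θ j ℓ = i then A.v i (θ i) j / h else 0)
          (A.B i (θ i)) = ∑ i, ∑ τ, O i τ := by
    simp only [O, LPoA.value_eq]
    have : ∀ i, ∑ τ : Fin (A.t i), ∑ θ : ∀ i, Fin (A.t i), (∏ i, A.π i (θ i)) *
        ((if θ i = τ then (1:ℝ) else 0) *
          min (∑ j, A.v i τ j * LPoA.frac (ALLOC θ) i j) (A.B i τ))
        = ∑ θ : ∀ i, Fin (A.t i), (∏ i, A.π i (θ i)) *
          min (∑ j, A.v i (θ i) j * LPoA.frac (ALLOC θ) i j) (A.B i (θ i)) := by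
      intro i
      rw [Finset.sum_comm]
      simp
    simp only [this]
    rw [Finset.sum_comm]
    simp only [Finset.mul_sum]
  have hWsum : ∑ i, ∑ τ, W i τ = Bayes.LW A s := by
    unfold Bayes.LW
    apply Finset.sum_congr rfl
    intro i _
    simp only [W]
    rw [Finset.sum_comm]
    simp
  have hXsum : ∀ j, ∑ i, ∑ τ, X i τ j = 1 := by
    intro j
    have : ∀ i, ∑ τ, X i τ j = ∑ θ : ∀ i, Fin (A.t i), (∏ i, A.π i (θ i)) *
        LPoA.frac (ALLOC θ) i j := by
      intro i
      simp only [X]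
      rw [Finset.sum_comm]
      simp
    simp only [this]
    rw [Finset.sum_comm]
    simp only [← Finset.mul_sum, LPoA.frac_sum hh, mul_one, hπt]
  have hPsum : ∀ j, ∑ i, ∑ τ, P i τ j = 1 := by
    intro j
    have : ∀ i, ∑ τ, P i τ j = ∑ ω, Bayes.prob A s ω *
        LPoA.frac (A.win (Bayes.bids A s ω)) i j := by
      intro i
      simp only [P]
      rw [Finset.sum_comm]
      simp
    simp only [this]
    rw [Finset.sum_comm]
    simp only [← Finset.mul_sum, LPoA.frac_sum hh, mul_one, LPoA.prob_sum]
  have hhsum : ∑ i, ∑ τ, A.π i τ / h ≤ 1 := by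
    simp only [← Finset.sum_div, A.π_sum]
    simp only [Finset.sum_const, Finset.card_univ, Fintype.card_fin, nsmul_eq_mul, mul_one]
    rw [div_le_one hhR]
    exact_mod_cast hnh
  have hprice := LPoA.price_total A s hs_nob hs_nobud
  have hprice0 : 0 ≤ ∑ j, ∑ ℓ, LPoA.price A s j ℓ :=
    Finset.sum_nonneg fun j _ => Finset.sum_nonneg fun ℓ _ => LPoA.price_nonneg A s j ℓ
  have hagg : ∑ i, ∑ τ, (∑ j, (∑ ℓ, LPoA.price A s j ℓ) *
      (X i τ j + 2 * P i τ j + A.π i τ / h)) ≤ 4 * ∑ j, ∑ ℓ, LPoA.price A s j ℓ := by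
    have e : ∑ i, ∑ τ, (∑ j, (∑ ℓ, LPoA.price A s j ℓ) *
        (X i τ j + 2 * P i τ j + A.π i τ / h)) = ∑ j, (∑ ℓ, LPoA.price A s j ℓ) *
        (∑ i, ∑ τ, X i τ j + 2 * (∑ i, ∑ τ, P i τ j) + ∑ i, ∑ τ, A.π i τ / h) := by
      have e1 : ∀ j, (∑ i, ∑ τ, X i τ j + 2 * (∑ i, ∑ τ, P i τ j) + ∑ i, ∑ τ, A.π i τ / h)
          = ∑ i, ∑ τ, (X i τ j + 2 * P i τ j + A.π i τ / h) := by
        intro j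
        simp only [Finset.sum_add_distrib, ← Finset.mul_sum]
      simp only [e1]
      have e2 : ∀ i, ∑ τ, (∑ j, (∑ ℓ, LPoA.price A s j ℓ) *
          (X i τ j + 2 * P i τ j + A.π i τ / h)) = ∑ j, (∑ ℓ, LPoA.price A s j ℓ) *
          ∑ τ, (X i τ j + 2 * P i τ j + A.π i τ / h) := by
        intro i
        rw [Finset.sum_comm]
        apply Finset.sum_congr rfl; intro j _
        rw [Finset.mul_sum]
      simp only [e2]
      rw [Finset.sum_comm]
      apply Finset.sum_congr rfl; intro j _
      rw [Finset.mul_sum]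
    rw [e, Finset.mul_sum]
    apply Finset.sum_le_sum
    intro j _
    rw [hXsum, hPsum]
    have : 0 ≤ ∑ ℓ, LPoA.price A s j ℓ := Finset.sum_nonneg fun ℓ _ => LPoA.price_nonneg A s j ℓ
    nlinarith
  have hall := Finset.sum_le_sum fun i (_ : i ∈ Finset.univ) =>
    Finset.sum_le_sum fun τ (_ : τ ∈ Finset.univ) => hkey i τ
  simp only [Finset.sum_add_distrib] at hall
  simp only [← Finset.mul_sum] at hall
  rw [hWsum] at hall
  rw [hOsum]
  have : (51.5 : ℝ) = 103 / 2 := by norm_num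
  rw [this]
  linarith
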